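/- Let p ∈ ℤ and let q be a positive integer. For every ε > 0 there exists a constant C > 0 such that for all positive integers τ, K, L, the set A_{K,L}(τ) := {(k, l) ∈ ℕ² : K ≤ k < 2K, L ≤ l < 2L, and q·τ = q·(k(k+4))² + p·k(k+4) + q·(l(l+4))² + p·l(l+4)} has cardinality at most C·K^ε. -/

import Mathlib

/-!
Completing the square turns the resonance equation into `X² + Y² = n` with `X = 2q·k(k+4) + p`,
`Y = 2q·l(l+4) + p` and `n = 4q²τ + 2p²`, where `|X| ≤ M` for some `M = O(K²)`. If `n ≤ 2M⁴`, the
divisor bound shows that the circle `X² + Y² = n` carries only `O(M^ε)` lattice points. If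
`n > 2M⁴`, then `|Y| > M²` throughout the strip `|X| ≤ M`; distinct values of `|Y|` would have
squares more than `2M²` apart, while `X²` varies by at most `M²`, so the strip contains at most
four points. Either way the bound is uniform in `n`.
-/

open Finset
open scoped Pointwise

lemma add_one_le_div_mul_pow {t : ℝ} (ht : 1 < t) (e : ℕ) : (e + 1 : ℝ) ≤ t / (t - 1) * t ^ e := by
  have ht' : 0 < t - 1 := sub_pos.2 ht
  have bernoulli : 1 + (e + 1 : ℕ) * (t - 1) ≤ t ^ (e + 1) :=
    one_add_mul_sub_le_pow (by linarith) (e + 1)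
  rw [div_mul_eq_mul_div, le_div_iff₀ ht', ← pow_succ']
  push_cast at bernoulli
  linarith

lemma add_one_le_pow_of_two_le {t : ℝ} (ht : 2 ≤ t) (e : ℕ) : (e + 1 : ℝ) ≤ t ^ e :=
  calc (e + 1 : ℝ) ≤ 2 ^ e := by exact_mod_cast Nat.lt_two_pow_self
    _ ≤ t ^ e := by gcongr

lemma prod_primeFactors_rpow_pow {n : ℕ} (hn : n ≠ 0) (ε : ℝ) :
    ∏ p ∈ n.primeFactors, ((p : ℝ) ^ ε) ^ n.factorization p = (n : ℝ) ^ ε := by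
  simp_rw [Real.rpow_pow_comm (Nat.cast_nonneg _)]
  rw [Real.finsetProd_rpow _ _ fun _ _ ↦ by positivity]
  congr 1
  exact_mod_cast Nat.prod_factorization_pow_eq_self hn

lemma card_divisors_le_prod_mul_rpow {ε : ℝ} {c : ℕ → ℝ}
    (hc : ∀ p : ℕ, p.Prime → ∀ e : ℕ, (e + 1 : ℝ) ≤ c p * ((p : ℝ) ^ ε) ^ e)
    {n : ℕ} (hn : n ≠ 0) :
    (#n.divisors : ℝ) ≤ (∏ p ∈ n.primeFactors, c p) * (n : ℝ) ^ ε := by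
  rw [Nat.card_divisors hn, ← prod_primeFactors_rpow_pow hn, ← prod_mul_distrib]
  push_cast
  exact prod_le_prod (fun _ _ ↦ by positivity) fun p hp ↦ hc p (Nat.prime_of_mem_primeFactors hp) _

theorem exists_card_divisors_le_rpow {ε : ℝ} (hε : 0 < ε) :
    ∃ C : ℝ, 0 < C ∧ ∀ n : ℕ, n ≠ 0 → (#n.divisors : ℝ) ≤ C * (n : ℝ) ^ ε := by
  obtain ⟨B, hB⟩ := exists_nat_ge ((2 : ℝ) ^ ε⁻¹)
  set t : ℝ := 2 ^ ε
  have ht : 1 < t := Real.one_lt_rpow one_lt_two hε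
  have hM : 1 ≤ t / (t - 1) := (one_le_div (sub_pos.2 ht)).2 (by linarith)
  refine ⟨(t / (t - 1)) ^ B, by positivity, fun n hn ↦ ?_⟩
  -- Primes `p < 2 ^ (1 / ε)` cost a constant factor each; the others, with `p ^ ε ≥ 2`, none.
  have prime_power_bound : ∀ p : ℕ, p.Prime → ∀ e : ℕ,
      (e + 1 : ℝ) ≤ (if p < B then t / (t - 1) else 1) * ((p : ℝ) ^ ε) ^ e := by
    intro p hp e
    split_ifs with hpB
    · have htp : t ≤ (p : ℝ) ^ ε :=
        Real.rpow_le_rpow zero_le_two (by exact_mod_cast hp.two_le) hε.le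
      exact (add_one_le_div_mul_pow ht e).trans (by gcongr)
    · have hBp : (2 : ℝ) ^ ε⁻¹ ≤ p := hB.trans (by exact_mod_cast not_lt.1 hpB)
      rw [one_mul]
      exact add_one_le_pow_of_two_le
        ((Real.rpow_inv_le_iff_of_pos zero_le_two p.cast_nonneg hε).1 hBp) e
  have small_primes : #{p ∈ n.primeFactors | p < B} ≤ B := by
    calc #{p ∈ n.primeFactors | p < B} ≤ #(range B) :=
          card_le_card fun p hp ↦ mem_range.2 (mem_filter.1 hp).2
      _ = B := card_range B
  refine (card_divisors_le_prod_mul_rpow prime_power_bound hn).trans ?_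
  rw [← prod_filter, prod_const]
  gcongr

section NormFiber

/-- The solutions `z` of the norm equation `N(z) = n` in `ℤ√d`. For `d = -1` these are the lattice
points on the circle of radius `√n` about the origin. -/
def normFiber (d n : ℤ) : Set (ℤ√d) := {z | z.norm = n}

variable {d : ℤ}

lemma irreducible_of_prime_norm {z : ℤ√d} (hz : Prime z.norm) : Irreducible z := by
  have : IsLocalHom (Zsqrtd.normMonoidHom (d := d)) := ⟨fun w ↦ (Zsqrtd.isUnit_iff_norm_isUnit w).2⟩
  exact Irreducible.of_map (f := Zsqrtd.normMonoidHom) hz.irreducible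

lemma dvd_or_star_dvd_of_dvd_norm {π z : ℤ√d} (hπ : Prime π) (h : π.norm ∣ z.norm) :
    π ∣ z ∨ star π ∣ z := by
  have hdvd : π ∣ z * star z := by
    rw [← Zsqrtd.norm_eq_mul_conj]
    exact (Dvd.intro (star π) (Zsqrtd.norm_eq_mul_conj π).symm).trans (Int.cast_dvd_cast _ _ h)
  refine (hπ.dvd_or_dvd hdvd).imp_right fun hstar ↦ ?_
  simpa only [starRingEnd_apply, star_star] using map_dvd (starRingEnd (ℤ√d)) hstar

lemma norm_pow_mul_star_pow (π : ℤ√d) (a b : ℕ) :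
    (π ^ a * star π ^ b).norm = π.norm ^ (a + b) := by
  have norm_pow (x : ℤ√d) (n : ℕ) : (x ^ n).norm = x.norm ^ n := map_pow Zsqrtd.normMonoidHom x n
  rw [Zsqrtd.norm_mul, norm_pow, norm_pow, Zsqrtd.norm_conj, pow_add]

lemma exists_pow_mul_star_pow_dvd {π : ℤ√d} (hπ : Prime π) (hN : π.norm ≠ 0) (e : ℕ) {z : ℤ√d}
    (hz : π.norm ^ e ∣ z.norm) : ∃ ab ∈ antidiagonal e, π ^ ab.1 * star π ^ ab.2 ∣ z := by
  induction e generalizing z with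
  | zero => exact ⟨(0, 0), by simp, by simp⟩
  | succ e ih =>
    have descend {x w : ℤ√d} (hx : x.norm = π.norm) (hzw : z = x * w) :
        π.norm ^ e ∣ w.norm := by
      rw [hzw, Zsqrtd.norm_mul, hx, pow_succ'] at hz
      exact (mul_dvd_mul_iff_left hN).1 hz
    obtain ⟨w, hw⟩ | ⟨w, hw⟩ :=
      dvd_or_star_dvd_of_dvd_norm hπ ((dvd_pow_self _ e.succ_ne_zero).trans hz)
    · obtain ⟨⟨a, b⟩, hab, hdvd⟩ := ih (descend rfl hw)
      refine ⟨(a + 1, b), by simp only [HasAntidiagonal.mem_antidiagonal] at hab ⊢; omega, ?_⟩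
      rw [hw, pow_succ', mul_assoc]
      exact mul_dvd_mul_left π hdvd
    · obtain ⟨⟨a, b⟩, hab, hdvd⟩ := ih (descend (Zsqrtd.norm_conj π) hw)
      refine ⟨(a, b + 1), by simp only [HasAntidiagonal.mem_antidiagonal] at hab ⊢; omega, ?_⟩
      rw [hw, pow_succ', mul_left_comm]
      exact mul_dvd_mul_left (star π) hdvd

lemma exists_normFiber_norm_pow_mul_subset {π : ℤ√d} (hπ : Prime π) (hN : π.norm ≠ 0) (e : ℕ)
    (m : ℤ) : ∃ S : Finset (ℤ√d), #S ≤ e + 1 ∧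
      normFiber d (π.norm ^ e * m) ⊆ (S : Set (ℤ√d)) * normFiber d m := by
  classical
  refine ⟨(antidiagonal e).image fun ab ↦ π ^ ab.1 * star π ^ ab.2,
    card_image_le.trans_eq (Nat.card_antidiagonal e), fun z (hz : z.norm = _) ↦ ?_⟩
  obtain ⟨ab, hab, w, rfl⟩ := exists_pow_mul_star_pow_dvd hπ hN e (hz ▸ dvd_mul_right _ _)
  refine Set.mul_mem_mul (mem_coe.2 (mem_image_of_mem _ hab)) ?_
  rw [Zsqrtd.norm_mul, norm_pow_mul_star_pow, mem_antidiagonal.1 hab] at hz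
  exact mul_left_cancel₀ (pow_ne_zero e hN) hz

end NormFiber

lemma exists_prime_gaussianInt_norm_eq {p : ℕ} (hp : p.Prime) (hp4 : p % 4 ≠ 3) :
    ∃ π : GaussianInt, Prime π ∧ π.norm = p := by
  have : Fact p.Prime := ⟨hp⟩
  obtain ⟨a, b, hab⟩ := Nat.Prime.sq_add_sq hp4
  have hnorm : (⟨a, b⟩ : GaussianInt).norm = p := by
    rw [Zsqrtd.norm_def, ← hab]
    push_cast
    ring
  refine ⟨⟨a, b⟩, (irreducible_of_prime_norm ?_).prime, hnorm⟩
  rw [hnorm]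
  exact Nat.prime_iff_prime_int.1 hp

lemma even_of_gaussianInt_norm_eq_pow_mul {p m e : ℕ} (hp : p.Prime) (hp4 : p % 4 = 3)
    (hpm : ¬p ∣ m) {z : GaussianInt} (hz : z.norm = p ^ e * m) : Even e := by
  have : Fact p.Prime := ⟨hp⟩
  obtain rfl | he := eq_or_ne e 0
  · exact Even.zero
  have hm : m ≠ 0 := by rintro rfl; exact hpm (dvd_zero p)
  have hsum : p ^ e * m = z.re.natAbs ^ 2 + z.im.natAbs ^ 2 := by
    rw [sq, sq, ← GaussianInt.natAbs_norm_eq, hz]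
    norm_cast
  have hmem : p ∈ (p ^ e * m).primeFactors :=
    Nat.mem_primeFactors.2
      ⟨hp, (dvd_pow_self p he).mul_right m, mul_ne_zero (pow_ne_zero e hp.ne_zero) hm⟩
  have heven := Nat.eq_sq_add_sq_iff.1 ⟨_, _, hsum⟩ p hmem hp4
  rwa [padicValNat.mul (pow_ne_zero e hp.ne_zero) hm, padicValNat.prime_pow,
    padicValNat.eq_zero_of_not_dvd hpm, add_zero] at heven

lemma exists_normFiber_prime_pow_mul_subset {p m : ℕ} (hp : p.Prime) (hpm : ¬p ∣ m) (e : ℕ) :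
    ∃ S : Finset GaussianInt, #S ≤ e + 1 ∧
      normFiber (-1) (p ^ e * m) ⊆ (S : Set GaussianInt) * normFiber (-1) m := by
  have : Fact p.Prime := ⟨hp⟩
  have hp0 : (p : ℤ) ≠ 0 := by exact_mod_cast hp.ne_zero
  by_cases hp4 : p % 4 = 3
  · by_cases he : Even e
    · obtain ⟨f, rfl⟩ := he
      have hnorm : (p : GaussianInt).norm = p * p := Zsqrtd.norm_natCast p
      obtain ⟨S, hS, hsub⟩ := exists_normFiber_norm_pow_mul_subset
        (GaussianInt.prime_of_nat_prime_of_mod_four_eq_three p hp4)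
        (hnorm ▸ mul_ne_zero hp0 hp0) f m
      rw [hnorm, mul_pow, ← pow_add] at hsub
      exact ⟨S, by omega, hsub⟩
    · exact ⟨∅, by simp, fun z hz ↦
        (he (even_of_gaussianInt_norm_eq_pow_mul hp hp4 hpm hz)).elim⟩
  · obtain ⟨π, hπ, hnorm⟩ := exists_prime_gaussianInt_norm_eq hp hp4
    simpa only [hnorm] using exists_normFiber_norm_pow_mul_subset hπ (hnorm ▸ hp0) e m

lemma normFiber_neg_one_one_subset :
    normFiber (-1) 1 ⊆ (({⟨1, 0⟩, ⟨-1, 0⟩, ⟨0, 1⟩, ⟨0, -1⟩} : Finset GaussianInt) : Set _) := by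
  rintro ⟨x, y⟩ hz
  have hxy : x * x + y * y = 1 := by simpa [normFiber, Zsqrtd.norm_def] using hz
  obtain ⟨hx₁, hx₂⟩ : -1 ≤ x ∧ x ≤ 1 := ⟨by nlinarith, by nlinarith⟩
  obtain ⟨hy₁, hy₂⟩ : -1 ≤ y ∧ y ≤ 1 := ⟨by nlinarith, by nlinarith⟩
  interval_cases x <;> interval_cases y <;> simp_all

theorem encard_normFiber_neg_one_le {n : ℕ} (hn : n ≠ 0) :
    (normFiber (-1) n).encard ≤ 4 * #n.divisors := by
  induction n using Nat.recOnPrimePow with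
  | zero => exact (hn rfl).elim
  | one =>
    refine (Set.encard_le_encard normFiber_neg_one_one_subset).trans ?_
    rw [Set.encard_coe_eq_coe_finsetCard]
    exact_mod_cast card_le_four
  | prime_pow_mul m p e hp hpm _ ih =>
    obtain ⟨S, hS, hsub⟩ := exists_normFiber_prime_pow_mul_subset hp hpm e
    have hdivisors : #(p ^ e * m).divisors = (e + 1) * #m.divisors := by
      rw [((hp.coprime_iff_not_dvd.2 hpm).pow_left e).card_divisors_mul,
        Nat.divisors_prime_pow hp, card_map, card_range]
    calc (normFiber (-1) ((p ^ e * m : ℕ) : ℤ)).encard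
        ≤ ((S : Set GaussianInt) * normFiber (-1) m).encard := by
          push_cast
          exact Set.encard_le_encard hsub
      _ ≤ (S : Set GaussianInt).encard * (normFiber (-1) m).encard := by
          rw [← Set.image_mul_prod, ← Set.encard_prod]
          exact Set.encard_image_le _ _
      _ ≤ (e + 1 : ℕ) * (4 * #m.divisors) := by
          rw [Set.encard_coe_eq_coe_finsetCard]
          gcongr
          exact ih (right_ne_zero_of_mul hn)
      _ = 4 * #(p ^ e * m).divisors := by
          rw [hdivisors]
          push_cast
          ring

lemma subsingleton_normFiber_neg_one {n : ℤ} (hn : n ≤ 0) : (normFiber (-1) n).Subsingleton := by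
  have eq_zero {z : GaussianInt} (hz : z ∈ normFiber (-1) n) : z = 0 :=
    GaussianInt.norm_eq_zero.1 (le_antisymm (le_of_eq_of_le hz hn) (GaussianInt.norm_nonneg z))
  exact fun z hz w hw ↦ (eq_zero hz).trans (eq_zero hw).symm

lemma finite_normFiber_neg_one (n : ℤ) : (normFiber (-1) n).Finite := by
  obtain hn | hn := le_or_gt n 0
  · exact (subsingleton_normFiber_neg_one hn).finite
  · lift n to ℕ using hn.le
    exact Set.finite_of_encard_le_coe (encard_normFiber_neg_one_le (by omega))

theorem exists_ncard_normFiber_neg_one_le_rpow {ε : ℝ} (hε : 0 < ε) :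
    ∃ C : ℝ, 0 < C ∧ ∀ (n : ℤ) (N : ℝ), 1 ≤ N → n ≤ N →
      ((normFiber (-1) n).ncard : ℝ) ≤ C * N ^ ε := by
  obtain ⟨C, hC, hdivisors⟩ := exists_card_divisors_le_rpow hε
  refine ⟨1 + 4 * C, by positivity, fun n N hN hnN ↦ ?_⟩
  obtain hn | hn := le_or_gt n 0
  · calc ((normFiber (-1) n).ncard : ℝ) ≤ 1 := by
          exact_mod_cast (Set.ncard_le_one_iff (finite_normFiber_neg_one n)).2
            (subsingleton_normFiber_neg_one hn · ·)
      _ ≤ (1 + 4 * C) * N ^ ε :=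
          one_le_mul_of_one_le_of_one_le (by linarith) (Real.one_le_rpow hN hε.le)
  · lift n to ℕ using hn.le
    have hn0 : n ≠ 0 := by omega
    have hcard : (normFiber (-1) n).ncard ≤ 4 * #n.divisors :=
      (Set.encard_le_coe_iff_finite_ncard_le.1 (encard_normFiber_neg_one_le hn0)).2
    calc ((normFiber (-1) n).ncard : ℝ) ≤ 4 * #n.divisors := by exact_mod_cast hcard
      _ ≤ 4 * (C * (n : ℝ) ^ ε) := by gcongr; exact hdivisors n hn0
      _ ≤ 4 * (C * N ^ ε) := by gcongr; exact_mod_cast hnN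
      _ ≤ (1 + 4 * C) * N ^ ε := by nlinarith [Real.rpow_nonneg (zero_le_one.trans hN) ε]

lemma gaussianInt_norm_eq_sq_add_sq (z : GaussianInt) : z.norm = z.re ^ 2 + z.im ^ 2 := by
  rw [Zsqrtd.norm_def]
  ring

lemma abs_im_le_of_norm_eq {z w : GaussianInt} {M : ℤ} (hnorm : z.norm = w.norm)
    (hz : |z.re| ≤ M) (hM : 2 * M ^ 4 < z.norm) : |w.im| ≤ |z.im| := by
  by_contra! hlt
  have hre : z.re ^ 2 ≤ M ^ 2 := sq_le_sq.2 (hz.trans (le_abs_self M))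
  rw [gaussianInt_norm_eq_sq_add_sq] at hM
  have hlarge : M ^ 2 < |z.im| := by
    refine lt_of_pow_lt_pow_left₀ 2 (abs_nonneg _) ?_
    have hM4 : M ^ 2 ≤ (M ^ 2) ^ 2 := Int.le_self_sq _
    rw [sq_abs]
    linarith
  have hgap : (|z.im| + 1) ^ 2 ≤ |w.im| ^ 2 := by gcongr; omega
  rw [add_sq, sq_abs, sq_abs] at hgap
  rw [gaussianInt_norm_eq_sq_add_sq, gaussianInt_norm_eq_sq_add_sq] at hnorm
  linarith [sq_nonneg w.re, sq_nonneg M]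

lemma eq_or_eq_neg_or_eq_star_or_eq_neg_star {z w : GaussianInt} (hre : |w.re| = |z.re|)
    (him : |w.im| = |z.im|) : w = z ∨ w = -z ∨ w = star z ∨ w = -star z := by
  simp only [Zsqrtd.ext_iff, Zsqrtd.re_neg, Zsqrtd.im_neg, Zsqrtd.re_star, Zsqrtd.im_star, neg_neg]
  rcases abs_eq_abs.1 hre with h | h <;> rcases abs_eq_abs.1 him with h' | h' <;> simp [h, h']

lemma ncard_strip_le_four {n M : ℤ} (hM : 2 * M ^ 4 < n) :
    {z ∈ normFiber (-1) n | |z.re| ≤ M}.ncard ≤ 4 := by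
  classical
  obtain hempty | ⟨z, hz, hzM⟩ := {z ∈ normFiber (-1) n | |z.re| ≤ M}.eq_empty_or_nonempty
  · simp [hempty]
  have hsub : {z ∈ normFiber (-1) n | |z.re| ≤ M} ⊆
      (({z, -z, star z, -star z} : Finset GaussianInt) : Set _) := by
    rintro w ⟨hw, hwM⟩
    have hnorm : z.norm = w.norm := Eq.trans hz hw.symm
    have him : |w.im| = |z.im| := le_antisymm
      (abs_im_le_of_norm_eq hnorm hzM (hz ▸ hM))
      (abs_im_le_of_norm_eq hnorm.symm hwM (hw ▸ hM))
    have hre : |w.re| = |z.re| := by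
      rw [← sq_eq_sq_iff_abs_eq_abs] at him ⊢
      rw [gaussianInt_norm_eq_sq_add_sq, gaussianInt_norm_eq_sq_add_sq] at hnorm
      linarith
    simpa using eq_or_eq_neg_or_eq_star_or_eq_neg_star hre him
  calc _ ≤ _ := Set.ncard_le_ncard hsub (finite_toSet _)
    _ ≤ 4 := by rw [Set.ncard_coe_finset]; exact card_le_four

theorem exists_ncard_strip_le_rpow {ε : ℝ} (hε : 0 < ε) :
    ∃ C : ℝ, 0 < C ∧ ∀ (n : ℤ) (M : ℕ), 0 < M →
      ({z ∈ normFiber (-1) n | |z.re| ≤ M}.ncard : ℝ) ≤ C * (M : ℝ) ^ ε := by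
  obtain ⟨C, hC, hcircle⟩ := exists_ncard_normFiber_neg_one_le_rpow (show 0 < ε / 4 by positivity)
  refine ⟨4 + C * 2 ^ (ε / 4), by positivity, fun n M hM ↦ ?_⟩
  have hM1 : (1 : ℝ) ≤ M := by exact_mod_cast hM
  have hMε : 1 ≤ (M : ℝ) ^ ε := Real.one_le_rpow hM1 hε.le
  obtain hn | hn := lt_or_ge (2 * (M : ℤ) ^ 4) n
  · calc ({z ∈ normFiber (-1) n | |z.re| ≤ M}.ncard : ℝ) ≤ 4 * 1 := by
          exact_mod_cast ncard_strip_le_four hn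
      _ ≤ (4 + C * 2 ^ (ε / 4)) * (M : ℝ) ^ ε := by
          gcongr
          exact le_add_of_nonneg_right (by positivity)
  · have hM4 : (1 : ℝ) ≤ 2 * (M : ℝ) ^ 4 := by nlinarith [one_le_pow₀ hM1 (n := 4)]
    have hrpow : (2 * (M : ℝ) ^ 4) ^ (ε / 4) = 2 ^ (ε / 4) * (M : ℝ) ^ ε := by
      rw [Real.mul_rpow zero_le_two (by positivity), ← Real.rpow_natCast_mul M.cast_nonneg]
      congr 2
      push_cast
      ring
    calc ({z ∈ normFiber (-1) n | |z.re| ≤ M}.ncard : ℝ)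
        ≤ (normFiber (-1) n).ncard := by
          exact_mod_cast Set.ncard_le_ncard (Set.sep_subset _ _) (finite_normFiber_neg_one n)
      _ ≤ C * (2 * (M : ℝ) ^ 4) ^ (ε / 4) := hcircle n _ hM4 (by exact_mod_cast hn)
      _ = C * 2 ^ (ε / 4) * (M : ℝ) ^ ε := by rw [hrpow]; ring
      _ ≤ (4 + C * 2 ^ (ε / 4)) * (M : ℝ) ^ ε := by
          gcongr
          exact le_add_of_nonneg_left zero_le_four

/-- The integer points `(x, y)` of the circle `q x² + p x + q y² + p y = c` in the strip
`|x| ≤ M`. -/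
def circleStrip (p q c M : ℤ) : Set (ℤ × ℤ) :=
  {v | |v.1| ≤ M ∧ c = q * v.1 ^ 2 + p * v.1 + q * v.2 ^ 2 + p * v.2}

theorem exists_ncard_circleStrip_le_rpow (p : ℤ) {q : ℤ} (hq : q ≠ 0) {ε : ℝ} (hε : 0 < ε) :
    ∃ C : ℝ, 0 < C ∧ ∀ (c : ℤ) (M : ℕ), 0 < M →
      (circleStrip p q c M).Finite ∧ ((circleStrip p q c M).ncard : ℝ) ≤ C * (M : ℝ) ^ ε := by
  obtain ⟨C, hC, hstrip⟩ := exists_ncard_strip_le_rpow hε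
  have hq0 : 0 < q.natAbs := Int.natAbs_pos.2 hq
  set E : ℕ := 2 * q.natAbs + p.natAbs with hE
  have hE0 : 0 < E := by omega
  refine ⟨C * (E : ℝ) ^ ε, by positivity, fun c M hM ↦ ?_⟩
  set T := {z ∈ normFiber (-1) (4 * q * c + 2 * p ^ 2) | |z.re| ≤ (E * M : ℕ)}
  let f (v : ℤ × ℤ) : GaussianInt := ⟨2 * q * v.1 + p, 2 * q * v.2 + p⟩
  have hf : f.Injective := by
    rintro ⟨x, y⟩ ⟨x', y'⟩ h
    simpa [f, Zsqrtd.ext_iff, hq] using h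
  have hmaps : Set.MapsTo f (circleStrip p q c M) T := by
    rintro ⟨x, y⟩ ⟨hx, hc⟩
    refine ⟨?_, ?_⟩
    · simp only [normFiber, Set.mem_ofPred_eq, gaussianInt_norm_eq_sq_add_sq, f]
      linear_combination (-4 * q) * hc
    · have hM1 : (1 : ℤ) ≤ M := by exact_mod_cast hM
      calc |2 * q * x + p| ≤ 2 * |q| * |x| + |p| * 1 := by
            simpa [abs_mul] using abs_add_le (2 * q * x) p
        _ ≤ 2 * |q| * M + |p| * M := by gcongr
        _ = (E * M : ℕ) := by
            rw [hE]
            push_cast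
            ring
  have hT : T.Finite := (finite_normFiber_neg_one _).subset (Set.sep_subset _ _)
  refine ⟨hT.of_injOn hmaps hf.injOn, ?_⟩
  calc ((circleStrip p q c M).ncard : ℝ) ≤ T.ncard := by
        exact_mod_cast Set.ncard_le_ncard_of_injOn f hmaps hf.injOn hT
    _ ≤ C * ((E * M : ℕ) : ℝ) ^ ε := hstrip _ _ (Nat.mul_pos hE0 hM)
    _ = C * (E : ℝ) ^ ε * (M : ℝ) ^ ε := by
        rw [Nat.cast_mul, Real.mul_rpow E.cast_nonneg M.cast_nonneg, mul_assoc]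

/-- The `k`-th eigenvalue of `-Δ` on the sphere `S^(d+1)`; the shift in the dimension avoids the
subtraction in the usual formula `k (k + n - 1)` on `Sⁿ`. -/
def sphereEigenvalue (d k : ℕ) : ℤ := k * (k + d)

lemma sphereEigenvalue_nonneg (d k : ℕ) : 0 ≤ sphereEigenvalue d k := by
  unfold sphereEigenvalue
  positivity

lemma sphereEigenvalue_strictMono (d : ℕ) : StrictMono (sphereEigenvalue d) := by
  intro k l hkl
  unfold sphereEigenvalue
  gcongr

lemma sphereEigenvalue_le (d k : ℕ) : sphereEigenvalue d k ≤ (d + 1) * (k : ℤ) ^ 2 := by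
  have hk : (k : ℤ) ≤ (k : ℤ) ^ 2 := by exact_mod_cast Nat.le_self_pow two_ne_zero k
  unfold sphereEigenvalue
  nlinarith

/-- The pairs `(k, l)` with `k < 2K` and `τ = λ_k⁴ + λ_l⁴` on `S^(d+1)`, where
`λ_k⁴ = μ_k² + (p/q) μ_k` and `μ_k` is the `k`-th eigenvalue of `-Δ`. After clearing the
denominator `τ` enters through the integer `c = q τ`. -/
def sphereResonanceSet (d : ℕ) (p q c : ℤ) (K : ℕ) : Set (ℕ × ℕ) :=
  {kl | kl.1 < 2 * K ∧
    c = q * sphereEigenvalue d kl.1 ^ 2 + p * sphereEigenvalue d kl.1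
      + q * sphereEigenvalue d kl.2 ^ 2 + p * sphereEigenvalue d kl.2}

theorem resonance_count_sphere_general (d : ℕ) (p : ℤ) {q : ℤ} (hq : q ≠ 0) {ε : ℝ} (hε : 0 < ε) :
    ∃ C : ℝ, 0 < C ∧ ∀ (c : ℤ) (K : ℕ), 0 < K → (sphereResonanceSet d p q c K).Finite ∧
      ((sphereResonanceSet d p q c K).ncard : ℝ) ≤ C * (K : ℝ) ^ ε := by
  obtain ⟨C, hC, hstrip⟩ := exists_ncard_circleStrip_le_rpow p hq (half_pos hε)
  refine ⟨C * (4 * (d + 1)) ^ (ε / 2), by positivity, fun c K hK ↦ ?_⟩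
  set M : ℕ := 4 * (d + 1) * K ^ 2 with hM
  obtain ⟨hfin, hcard⟩ := hstrip c M (by positivity)
  let f : ℕ × ℕ → ℤ × ℤ := Prod.map (sphereEigenvalue d) (sphereEigenvalue d)
  have hf : f.Injective :=
    (sphereEigenvalue_strictMono d).injective.prodMap (sphereEigenvalue_strictMono d).injective
  have hmaps : Set.MapsTo f (sphereResonanceSet d p q c K) (circleStrip p q c M) := by
    rintro ⟨k, l⟩ ⟨hk, hc⟩
    refine ⟨?_, hc⟩
    calc |sphereEigenvalue d k|
        = sphereEigenvalue d k := abs_of_nonneg (sphereEigenvalue_nonneg d k)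
      _ ≤ (d + 1) * (k : ℤ) ^ 2 := sphereEigenvalue_le d k
      _ ≤ (d + 1) * (2 * K : ℤ) ^ 2 := by gcongr; exact_mod_cast hk.le
      _ = M := by rw [hM]; push_cast; ring
  refine ⟨hfin.of_injOn hmaps hf.injOn, ?_⟩
  calc ((sphereResonanceSet d p q c K).ncard : ℝ) ≤ (circleStrip p q c M).ncard := by
        exact_mod_cast Set.ncard_le_ncard_of_injOn f hmaps hf.injOn hfin
    _ ≤ C * (M : ℝ) ^ (ε / 2) := hcard
    _ = C * (4 * (d + 1)) ^ (ε / 2) * (K : ℝ) ^ ε := by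
        rw [hM]
        push_cast
        rw [Real.mul_rpow (by positivity) (by positivity), ← Real.rpow_natCast_mul K.cast_nonneg,
          Nat.cast_ofNat, mul_div_cancel₀ ε two_ne_zero, mul_assoc]

/-- Counting bound for the resonance set `A_{K,L}(τ)` on the sphere `S⁵`:
for `β = p/q` rational, the set of pairs `(k, l)` in the dyadic ranges `[K, 2K) × [L, 2L)`
with `τ = λ_k⁴ + λ_l⁴` (after clearing the denominator `q`, where
`λ_k⁴ = (k(k+4))² + (p/q)·k(k+4)`) has cardinality at most `C · K ^ ε`. -/
theorem resonance_count_sphere (p : ℤ) (q : ℕ) (hq : 0 < q) :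
    ∀ ε : ℝ, 0 < ε → ∃ C : ℝ, 0 < C ∧ ∀ τ K L : ℕ, 0 < τ → 0 < K → 0 < L →
      (({kl : ℕ × ℕ | K ≤ kl.1 ∧ kl.1 < 2 * K ∧ L ≤ kl.2 ∧ kl.2 < 2 * L ∧
          (q : ℤ) * (τ : ℤ) =
            (q : ℤ) * ((kl.1 : ℤ) * ((kl.1 : ℤ) + 4)) ^ 2 + p * ((kl.1 : ℤ) * ((kl.1 : ℤ) + 4))
            + (q : ℤ) * ((kl.2 : ℤ) * ((kl.2 : ℤ) + 4)) ^ 2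
            + p * ((kl.2 : ℤ) * ((kl.2 : ℤ) + 4))} : Set (ℕ × ℕ)).ncard : ℝ)
        ≤ C * (K : ℝ) ^ ε := by
  intro ε hε
  obtain ⟨C, hC, hcount⟩ := resonance_count_sphere_general 4 p (Int.natCast_ne_zero.2 hq.ne') hε
  refine ⟨C, hC, fun τ K L _ hK _ ↦ ?_⟩
  obtain ⟨hfin, hcard⟩ := hcount (q * τ) K hK
  refine (Nat.cast_le.2 (Set.ncard_le_ncard ?_ hfin)).trans hcard
  exact fun kl ⟨_, hkK, _, _, hτ⟩ ↦ ⟨hkK, hτ⟩
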